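/- Let p, q, r, s ≥ 0 be real numbers, let R be a finite relation between finite types A and B, and let (X, Y) be any pair of random variables supported on R. Then (p + r + 2)·H(Y|X) + I(X;Y) + (q + s + 2)·H(X|Y) ≤ ln N_{p,q,r,s}(R), where N_{p,q,r,s}(R) := Σ over quadruples (a,b,c,d) with (a,b) ∈ R, (c,b) ∈ R, and (c,d) ∈ R of deg_R(a)^p · deg_R(b)^q · deg_R(c)^r · deg_R(d)^s. -/

import Mathlib

/-!
Let `w` be the joint law of `(X, Y)`, with marginals `α` and `β`. Walk along a path `a - b - c - d`
as a Markov chain in which each of the edges `(a, b)`, `(c, b)`, `(c, d)` has law `w`; its law is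
`w(a,b) w(c,b) w(c,d) / (β(b) α(c))`, it is supported on the paths counted by `Nmom`, and its entropy
is `3 H(X,Y) - H(X) - H(Y) = 2 H(Y|X) + I(X;Y) + 2 H(X|Y)`.

The Gibbs inequality (`gibbs`), applied to this law and the weights of `Nmom`, bounds `log Nmom`
from below by that entropy plus the expected logarithm of the weights. Since all vertex marginals are
those of `X` and `Y`, that expectation is `(p + r) E[log deg X] + (q + s) E[log deg Y]`, and
`E[log deg X] ≥ H(Y|X)`, `E[log deg Y] ≥ H(X|Y)` (`cond_le_log_deg`) because the conditional law
of one variable given the other lives on a set of size the degree.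
-/

open MeasureTheory Finset

/-- The probability that a random variable `X` takes the value `a`. -/
noncomputable def prob {Ω : Type*} [MeasurableSpace Ω] (μ : Measure Ω)
    {α : Type*} (X : Ω → α) (a : α) : ℝ :=
  (μ (X ⁻¹' {a})).toReal

/-- Shannon entropy (in nats) of a random variable valued in a finite type. -/
noncomputable def entropy {Ω : Type*} [MeasurableSpace Ω] (μ : Measure Ω)
    {α : Type*} [Fintype α] (X : Ω → α) : ℝ :=
  - ∑ a : α, prob μ X a * Real.log (prob μ X a)

/-- Conditional entropy `H(Y|X) = H(X, Y) - H(X)`. -/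
noncomputable def condEntropy {Ω : Type*} [MeasurableSpace Ω] (μ : Measure Ω)
    {α β : Type*} [Fintype α] [Fintype β] (Y : Ω → β) (X : Ω → α) : ℝ :=
  entropy μ (fun ω => (X ω, Y ω)) - entropy μ X

/-- Mutual information `I(X;Y) = H(X) + H(Y) - H(X, Y)`. -/
noncomputable def mutualInfo {Ω : Type*} [MeasurableSpace Ω] (μ : Measure Ω)
    {α β : Type*} [Fintype α] [Fintype β] (X : Ω → α) (Y : Ω → β) : ℝ :=
  entropy μ X + entropy μ Y - entropy μ (fun ω => (X ω, Y ω))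

/-- `degA R a` is the number of `b` with `(a, b) ∈ R`. -/
def degA {A B : Type*} [DecidableEq A] (R : Finset (A × B)) (a : A) : ℕ :=
  (R.filter fun x => x.1 = a).card

/-- `degB R b` is the number of `a` with `(a, b) ∈ R`. -/
def degB {A B : Type*} [DecidableEq B] (R : Finset (A × B)) (b : B) : ℕ :=
  (R.filter fun x => x.2 = b).card

/-- The caterpillar moment `V_{p,q,r}(R)`, summing over 3-vertex paths
`(a, b, c)` with `(a,b) ∈ R` and `(c,b) ∈ R`. -/
noncomputable def Vmom {A B : Type*} [Fintype A] [Fintype B]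
    [DecidableEq A] [DecidableEq B] (p q r : ℝ) (R : Finset (A × B)) : ℝ :=
  ∑ a : A, ∑ b : B, ∑ c : A,
    if (a, b) ∈ R ∧ (c, b) ∈ R then
      (degA R a : ℝ) ^ p * (degB R b : ℝ) ^ q * (degA R c : ℝ) ^ r
    else 0

/-- The caterpillar moment `N_{p,q,r,s}(R)`, summing over 4-vertex paths
`(a, b, c, d)` with `(a,b) ∈ R`, `(c,b) ∈ R`, and `(c,d) ∈ R`. -/
noncomputable def Nmom {A B : Type*} [Fintype A] [Fintype B]
    [DecidableEq A] [DecidableEq B] (p q r s : ℝ) (R : Finset (A × B)) : ℝ :=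
  ∑ a : A, ∑ b : B, ∑ c : A, ∑ d : B,
    if (a, b) ∈ R ∧ (c, b) ∈ R ∧ (c, d) ∈ R then
      (degA R a : ℝ) ^ p * (degB R b : ℝ) ^ q * (degA R c : ℝ) ^ r *
        (degB R d : ℝ) ^ s
    else 0

/-- The caterpillar moment `W_{p,q,r,s,t}(R)`, summing over 5-vertex paths
`(a, b, c, d, e)` with `(a,b) ∈ R`, `(c,b) ∈ R`, `(c,d) ∈ R`, and `(e,d) ∈ R`. -/
noncomputable def Wmom {A B : Type*} [Fintype A] [Fintype B]
    [DecidableEq A] [DecidableEq B] (p q r s t : ℝ) (R : Finset (A × B)) : ℝ :=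
  ∑ a : A, ∑ b : B, ∑ c : A, ∑ d : B, ∑ e : A,
    if (a, b) ∈ R ∧ (c, b) ∈ R ∧ (c, d) ∈ R ∧ (e, d) ∈ R then
      (degA R a : ℝ) ^ p * (degB R b : ℝ) ^ q * (degA R c : ℝ) ^ r *
        (degB R d : ℝ) ^ s * (degA R e : ℝ) ^ t
    else 0

/-- Gibbs' variational inequality: the entropy of `w` plus the `w`-average of `log F` is at most
the logarithm of the partition function `∑ F`. -/
lemma gibbs {ι : Type*} [Fintype ι] (w F : ι → ℝ) (hw : ∀ i, 0 ≤ w i) (hF : ∀ i, 0 ≤ F i)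
    (h1 : ∑ i, w i = 1) (hpos : ∀ i, w i ≠ 0 → 0 < F i) :
    ∑ i, w i * (Real.log (F i) - Real.log (w i)) ≤ Real.log (∑ i, F i) := by
  set S := ∑ i, F i with hS
  have hSpos : 0 < S := by
    obtain ⟨i, -, hi⟩ : ∃ i ∈ (univ : Finset ι), w i ≠ 0 :=
      Finset.exists_ne_zero_of_sum_ne_zero (by rw [h1]; exact one_ne_zero)
    exact Finset.sum_pos' (fun i _ => hF i) ⟨i, mem_univ i, hpos i hi⟩
  -- Termwise, `log x ≤ x - 1` at `x = F / (w S)`.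
  have key : ∀ i, w i * (Real.log (F i) - Real.log (w i)) - w i * Real.log S
      ≤ F i / S - w i := by
    intro i
    rcases eq_or_ne (w i) 0 with h0 | h0
    · rw [h0]
      have := div_nonneg (hF i) hSpos.le
      simpa using this
    · have hwi : 0 < w i := lt_of_le_of_ne (hw i) h0.symm
      have hFi := hpos i h0
      have h := Real.log_le_sub_one_of_pos (x := F i / (w i * S)) (by positivity)
      rw [Real.log_div hFi.ne' (by positivity), Real.log_mul h0 hSpos.ne'] at h
      have h2 := mul_le_mul_of_nonneg_left h hwi.le
      have h3 : w i * (F i / (w i * S) - 1) = F i / S - w i := by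
        field_simp
      linarith
  have hsum := Finset.sum_le_sum (fun i (_ : i ∈ (univ : Finset ι)) => key i)
  rw [Finset.sum_sub_distrib, Finset.sum_sub_distrib, ← Finset.sum_mul, ← Finset.sum_div, h1,
    ← hS, div_self hSpos.ne'] at hsum
  linarith

/-- Conditionally on `f = k`, the law `w` lives on the fibre of `R` over `k`, so its conditional
entropy given `f` is at most the expected log-size of the fibre. -/
lemma cond_le_log_deg {ι κ : Type*} [Fintype ι] [Fintype κ] [DecidableEq ι] [DecidableEq κ]
    (R : Finset ι) (f : ι → κ) (w : ι → ℝ) (m : κ → ℝ) (hw : ∀ i, 0 ≤ w i)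
    (hsupp : ∀ i, i ∉ R → w i = 0) (h1 : ∑ i, w i = 1)
    (hm : ∀ k, m k = ∑ i with f i = k, w i) :
    ∑ i, w i * Real.log (m (f i)) - ∑ i, w i * Real.log (w i)
      ≤ ∑ i, w i * Real.log ((R.filter fun x => f x = f i).card : ℝ) := by
  have hm0 : ∀ k, 0 ≤ m k := fun k => by rw [hm]; exact Finset.sum_nonneg fun i _ => hw i
  have hmpos : ∀ i, w i ≠ 0 → 0 < m (f i) := by
    intro i hi
    rw [hm]
    exact Finset.sum_pos' (fun j _ => hw j)
      ⟨i, by simp, lt_of_le_of_ne (hw i) hi.symm⟩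
  have hR : ∀ i, w i ≠ 0 → i ∈ R := fun i hi => by
    by_contra h
    exact hi (hsupp i h)
  have hdpos : ∀ i ∈ R, (0 : ℝ) < ((R.filter fun x => f x = f i).card : ℝ) := by
    intro i hi
    exact_mod_cast Finset.card_pos.2 ⟨i, by simp [hi]⟩
  -- Compare `w` with the law having the same `f`-marginal and uniform on each fibre of `R`.
  set F : ι → ℝ := fun i =>
    if i ∈ R then m (f i) / ((R.filter fun x => f x = f i).card : ℝ) else 0 with hFdef
  have hF : ∀ i, 0 ≤ F i := by
    intro i
    simp only [hFdef]
    split_ifs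
    · exact div_nonneg (hm0 _) (Nat.cast_nonneg _)
    · exact le_rfl
  have hFpos : ∀ i, w i ≠ 0 → 0 < F i := by
    intro i hi
    simp only [hFdef, if_pos (hR i hi)]
    exact div_pos (hmpos i hi) (hdpos i (hR i hi))
  have hFsum : ∑ i, F i ≤ 1 := by
    have e1 : ∑ i, F i = ∑ k, ∑ i with f i = k, F i := by
      rw [Finset.sum_fiberwise]
    have e2 : ∑ k, m k = 1 := by
      simp_rw [hm]
      rw [Finset.sum_fiberwise, h1]
    rw [e1, ← e2]
    refine Finset.sum_le_sum fun k _ => ?_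
    have e3 : ∑ i with f i = k, F i
        = ∑ i ∈ R.filter (fun x => f x = k), m k / ((R.filter fun x => f x = k).card : ℝ) := by
      simp only [Finset.sum_filter, hFdef]
      rw [← Finset.sum_filter_add_sum_filter_not univ (fun i => i ∈ R)]
      rw [Finset.sum_eq_zero (s := univ.filter fun i => i ∉ R)]
      · rw [Finset.filter_univ_mem, add_zero]
        refine Finset.sum_congr rfl fun i hi => ?_
        split_ifs with h
        · rw [h]
        · rfl
      · intro i hi
        simp [(Finset.mem_filter.1 hi).2]
    rw [e3, Finset.sum_const, nsmul_eq_mul]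
    rcases eq_or_ne ((R.filter fun x => f x = k).card : ℝ) 0 with h | h
    · rw [h, zero_mul]
      exact hm0 k
    · rw [mul_div_cancel₀ _ h]
  have hg := gibbs w F hw hF h1 hFpos
  have hlog : Real.log (∑ i, F i) ≤ 0 :=
    Real.log_nonpos (Finset.sum_nonneg fun i _ => hF i) hFsum
  have heq : ∑ i, w i * (Real.log (F i) - Real.log (w i))
      = ∑ i, w i * Real.log (m (f i)) - ∑ i, w i * Real.log (w i)
        - ∑ i, w i * Real.log ((R.filter fun x => f x = f i).card : ℝ) := by
    rw [← Finset.sum_sub_distrib, ← Finset.sum_sub_distrib]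
    refine Finset.sum_congr rfl fun i _ => ?_
    rcases eq_or_ne (w i) 0 with h0 | h0
    · simp [h0]
    · simp only [hFdef, if_pos (hR i h0)]
      rw [Real.log_div (hmpos i h0).ne' (hdpos i (hR i h0)).ne']
      ring
  linarith

lemma prob_comp {Ω ι κ : Type*} [MeasurableSpace Ω] [Fintype ι] [DecidableEq κ]
    (μ : Measure Ω) [IsProbabilityMeasure μ] (Z : Ω → ι) (f : ι → κ)
    (hZ : ∀ i, MeasurableSet (Z ⁻¹' {i})) (k : κ) :
    prob μ (fun ω => f (Z ω)) k = ∑ i with f i = k, prob μ Z i := by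
  unfold prob
  rw [← ENNReal.toReal_sum (fun i _ => measure_ne_top μ _),
    sum_measure_preimage_singleton _ (fun i _ => hZ i)]
  congr 2
  ext ω
  simp

lemma sum_fiber_mul {ι κ : Type*} [Fintype ι] [Fintype κ] [DecidableEq κ]
    (f : ι → κ) (w : ι → ℝ) (m g : κ → ℝ) (hm : ∀ k, m k = ∑ i with f i = k, w i) :
    ∑ k, m k * g k = ∑ i, w i * g (f i) := by
  rw [← Finset.sum_fiberwise univ f]
  refine Finset.sum_congr rfl fun k _ => ?_
  rw [hm, Finset.sum_mul]
  refine Finset.sum_congr rfl fun i hi => ?_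
  rw [(Finset.mem_filter.1 hi).2]

/-- The law of the Markov chain on paths `a - b - c - d` whose three edges all have law `w`, with
vertex marginals `α` and `β`. -/
noncomputable def pathLaw {A B : Type*} (w : A → B → ℝ) (α : A → ℝ) (β : B → ℝ)
    (a : A) (b : B) (c : A) (d : B) : ℝ :=
  w a b * w c b * w c d / (β b * α c)

section PathLaw

variable {A B : Type*} (w : A → B → ℝ) (α : A → ℝ) (β : B → ℝ)

lemma pathLaw_sum_d [Fintype B] (hα : ∀ a, α a = ∑ b, w a b) (h0 : ∀ a b, α a = 0 → w a b = 0)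
    (a : A) (b : B) (c : A) :
    ∑ d, pathLaw w α β a b c d = w a b * w c b / β b := by
  simp only [pathLaw]
  rw [← Finset.sum_div, ← Finset.mul_sum, ← hα]
  rcases eq_or_ne (α c) 0 with h | h
  · simp [h0 c b h]
  · rw [mul_div_mul_right _ _ h]

lemma pathLaw_sum_a [Fintype A] (hβ : ∀ b, β b = ∑ a, w a b) (h0 : ∀ a b, β b = 0 → w a b = 0)
    (b : B) (c : A) (d : B) :
    ∑ a, pathLaw w α β a b c d = w c b * w c d / α c := by
  simp only [pathLaw]
  rw [← Finset.sum_div]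
  simp_rw [mul_assoc]
  rw [← Finset.sum_mul, ← hβ]
  rcases eq_or_ne (β b) 0 with h | h
  · simp [h0 c b h]
  · rw [mul_div_mul_left _ _ h]

lemma sum_div_self [Fintype B] (hα : ∀ a, α a = ∑ b, w a b) (h0 : ∀ a b, α a = 0 → w a b = 0)
    (c : A) (b : B) : ∑ d, w c b * w c d / α c = w c b := by
  rw [← Finset.sum_div, ← Finset.mul_sum, ← hα]
  rcases eq_or_ne (α c) 0 with h | h
  · simp [h0 c b h]
  · rw [mul_div_cancel_right₀ _ h]

/-- Averages of edge functions under `pathLaw` are averages under `w`, for each of the three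
edges of the path. -/
lemma pathLaw_avg [Fintype A] [Fintype B]
    (hα : ∀ a, α a = ∑ b, w a b) (hβ : ∀ b, β b = ∑ a, w a b)
    (h0 : ∀ a b, α a = 0 → w a b = 0) (h0' : ∀ a b, β b = 0 → w a b = 0)
    (G1 G2 G3 : A → B → ℝ) :
    ∑ a, ∑ b, ∑ c, ∑ d, pathLaw w α β a b c d * (G1 a b + G2 c b + G3 c d)
      = ∑ a, ∑ b, w a b * (G1 a b + G2 a b + G3 a b) := by
  have hd := pathLaw_sum_d w α β hα h0
  have ha := pathLaw_sum_a w α β hβ h0'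
  have hs := sum_div_self w α hα h0
  have hs' := sum_div_self (fun b a => w a b) β hβ (fun b a => h0' a b)
  have e1 : ∑ a, ∑ b, ∑ c, ∑ d, pathLaw w α β a b c d * G1 a b
      = ∑ a, ∑ b, w a b * G1 a b := by
    refine Finset.sum_congr rfl fun a _ => Finset.sum_congr rfl fun b _ => ?_
    simp_rw [← Finset.sum_mul, hd]
    rw [hs' b a]
  have e2 : ∑ a, ∑ b, ∑ c, ∑ d, pathLaw w α β a b c d * G2 c b
      = ∑ a, ∑ b, w a b * G2 a b := by
    simp_rw [← Finset.sum_mul, hd]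
    rw [Finset.sum_comm, Finset.sum_comm (f := fun a b => w a b * G2 a b)]
    refine Finset.sum_congr rfl fun b _ => ?_
    rw [Finset.sum_comm]
    refine Finset.sum_congr rfl fun c _ => ?_
    rw [← Finset.sum_mul]
    simp_rw [mul_comm _ (w c b)]
    rw [hs' b c]
  have e3 : ∑ a, ∑ b, ∑ c, ∑ d, pathLaw w α β a b c d * G3 c d
      = ∑ a, ∑ b, w a b * G3 a b := by
    rw [Finset.sum_comm]
    have : ∀ b, ∑ a, ∑ c, ∑ d, pathLaw w α β a b c d * G3 c d
        = ∑ c, ∑ d, w c b * w c d / α c * G3 c d := by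
      intro b
      rw [Finset.sum_comm]
      refine Finset.sum_congr rfl fun c _ => ?_
      rw [Finset.sum_comm]
      refine Finset.sum_congr rfl fun d _ => ?_
      rw [← Finset.sum_mul, ha]
    simp_rw [this]
    rw [Finset.sum_comm]
    refine Finset.sum_congr rfl fun c _ => ?_
    rw [Finset.sum_comm]
    refine Finset.sum_congr rfl fun d _ => ?_
    rw [← Finset.sum_mul]
    simp_rw [mul_comm _ (w c d)]
    rw [hs c d]
  simp_rw [mul_add, Finset.sum_add_distrib]
  rw [e1, e2, e3]

end PathLaw

/-- The Gibbs inequality for `pathLaw` against the weights of `Nmom`. -/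
lemma path_gibbs {A B : Type*} [Fintype A] [Fintype B] [DecidableEq A] [DecidableEq B]
    (p q r s : ℝ) (R : Finset (A × B)) (w : A → B → ℝ) (α : A → ℝ) (β : B → ℝ)
    (hw : ∀ a b, 0 ≤ w a b) (hsupp : ∀ a b, (a, b) ∉ R → w a b = 0)
    (h1 : ∑ a, ∑ b, w a b = 1)
    (hα : ∀ a, α a = ∑ b, w a b) (hβ : ∀ b, β b = ∑ a, w a b) :
    ∑ a, ∑ b, w a b * ((p + r) * Real.log (degA R a) + (q + s) * Real.log (degB R b)
        + Real.log (α a) + Real.log (β b) - 3 * Real.log (w a b))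
      ≤ Real.log (Nmom p q r s R) := by
  have h0 : ∀ a b, α a = 0 → w a b = 0 := fun a b h => by
    rw [hα, Finset.sum_eq_zero_iff_of_nonneg fun b _ => hw a b] at h
    exact h b (mem_univ b)
  have h0' : ∀ a b, β b = 0 → w a b = 0 := fun a b h => by
    rw [hβ, Finset.sum_eq_zero_iff_of_nonneg fun a _ => hw a b] at h
    exact h a (mem_univ a)
  have hα0 : ∀ a, 0 ≤ α a := fun a => by rw [hα]; exact Finset.sum_nonneg fun b _ => hw a b
  have hβ0 : ∀ b, 0 ≤ β b := fun b => by rw [hβ]; exact Finset.sum_nonneg fun a _ => hw a b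
  have hR : ∀ a b, w a b ≠ 0 → (a, b) ∈ R := fun a b h => by
    by_contra h'
    exact h (hsupp a b h')
  have hdA : ∀ a b, w a b ≠ 0 → (0 : ℝ) < degA R a := fun a b h => by
    exact_mod_cast Finset.card_pos.2 ⟨(a, b), by simp [hR a b h]⟩
  have hdB : ∀ a b, w a b ≠ 0 → (0 : ℝ) < degB R b := fun a b h => by
    exact_mod_cast Finset.card_pos.2 ⟨(a, b), by simp [hR a b h]⟩
  set F : A × B × A × B → ℝ := fun x =>
    if (x.1, x.2.1) ∈ R ∧ (x.2.2.1, x.2.1) ∈ R ∧ (x.2.2.1, x.2.2.2) ∈ R then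
      (degA R x.1 : ℝ) ^ p * (degB R x.2.1 : ℝ) ^ q * (degA R x.2.2.1 : ℝ) ^ r *
        (degB R x.2.2.2 : ℝ) ^ s
    else 0 with hF
  set P : A × B × A × B → ℝ := fun x => pathLaw w α β x.1 x.2.1 x.2.2.1 x.2.2.2 with hP
  have hne : ∀ a b c d, pathLaw w α β a b c d ≠ 0 → w a b ≠ 0 ∧ w c b ≠ 0 ∧ w c d ≠ 0 := by
    intro a b c d h
    refine ⟨?_, ?_, ?_⟩ <;> intro h' <;> simp [pathLaw, h'] at h
  have hP1 : ∑ x, P x = 1 := by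
    have h := pathLaw_avg w α β hα hβ h0 h0' (fun _ _ => 1) (fun _ _ => 0) (fun _ _ => 0)
    simp only [add_zero, mul_one] at h
    simp only [hP, Fintype.sum_prod_type]
    rw [h, h1]
  have hg := gibbs P F
    (fun x => div_nonneg (mul_nonneg (mul_nonneg (hw _ _) (hw _ _)) (hw _ _))
      (mul_nonneg (hβ0 _) (hα0 _)))
    (fun x => by
      simp only [hF]
      split_ifs <;> positivity)
    hP1
    (fun x hx => by
      obtain ⟨n1, n2, n3⟩ := hne _ _ _ _ hx
      simp only [hF, if_pos (And.intro (hR _ _ n1) (And.intro (hR _ _ n2) (hR _ _ n3)))]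
      have := hdA _ _ n1
      have := hdA _ _ n2
      have := hdB _ _ n1
      have := hdB _ _ n3
      positivity)
  have hN : ∑ x, F x = Nmom p q r s R := by
    simp only [hF, Fintype.sum_prod_type, Nmom]
  rw [hN] at hg
  refine le_trans (le_of_eq ?_) hg
  -- On the support, `log F - log P` splits as a sum of one function per edge.
  have hpt : ∀ a b c d, P (a, b, c, d) * (Real.log (F (a, b, c, d)) - Real.log (P (a, b, c, d)))
      = pathLaw w α β a b c d *
        ((p * Real.log (degA R a) + q * Real.log (degB R b) + Real.log (β b) - Real.log (w a b))
          + (r * Real.log (degA R c) + Real.log (α c) - Real.log (w c b))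
          + (s * Real.log (degB R d) - Real.log (w c d))) := by
    intro a b c d
    rcases eq_or_ne (pathLaw w α β a b c d) 0 with h | h
    · simp only [hP, h, zero_mul]
    · obtain ⟨n1, n2, n3⟩ := hne _ _ _ _ h
      have nα : α c ≠ 0 := fun h => n2 (h0 c b h)
      have nβ : β b ≠ 0 := fun h => n2 (h0' c b h)
      have d1 := hdA _ _ n1
      have d2 := hdB _ _ n1
      have d3 := hdA _ _ n2
      have d4 := hdB _ _ n3
      simp only [hP, hF, if_pos (And.intro (hR _ _ n1) (And.intro (hR _ _ n2) (hR _ _ n3)))]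
      congr 1
      rw [pathLaw, Real.log_div (by positivity) (by positivity), Real.log_mul (by positivity) n3,
        Real.log_mul n1 n2, Real.log_mul nβ nα, Real.log_mul (by positivity) (by positivity),
        Real.log_mul (by positivity) (by positivity), Real.log_mul (by positivity) (by positivity),
        Real.log_rpow d1, Real.log_rpow d2, Real.log_rpow d3, Real.log_rpow d4]
      ring
  simp only [Fintype.sum_prod_type, hpt]
  rw [pathLaw_avg w α β hα hβ h0 h0'
    (fun a b => p * Real.log (degA R a) + q * Real.log (degB R b) + Real.log (β b)
      - Real.log (w a b))
    (fun a b => r * Real.log (degA R a) + Real.log (α a) - Real.log (w a b))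
    (fun a b => s * Real.log (degB R b) - Real.log (w a b))]
  refine Finset.sum_congr rfl fun a _ => Finset.sum_congr rfl fun b _ => ?_
  ring

/-- caterpillar bound for `N`: for `p, q, r, s ≥ 0` and
`(X, Y)` supported on `R`,
`(p+r+2)·H(Y|X) + I(X;Y) + (q+s+2)·H(X|Y) ≤ ln N_{p,q,r,s}(R)`. -/
theorem stmt5 {Ω : Type*} [MeasurableSpace Ω]
    {A B : Type*} [Fintype A] [Fintype B] [DecidableEq A] [DecidableEq B]
    [MeasurableSpace A] [MeasurableSingletonClass A]
    [MeasurableSpace B] [MeasurableSingletonClass B]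
    (p q r s : ℝ) (hp : 0 ≤ p) (hq : 0 ≤ q) (hr : 0 ≤ r) (hs : 0 ≤ s)
    (R : Finset (A × B))
    (μ : Measure Ω) [IsProbabilityMeasure μ]
    (X : Ω → A) (Y : Ω → B) (hX : Measurable X) (hY : Measurable Y)
    (hsupp : ∀ᵐ ω ∂μ, (X ω, Y ω) ∈ R) :
    (p + r + 2) * condEntropy μ Y X + mutualInfo μ X Y +
        (q + s + 2) * condEntropy μ X Y ≤
      Real.log (Nmom p q r s R) := by
  set Z : Ω → A × B := fun ω => (X ω, Y ω) with hZdef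
  have hZ : ∀ i, MeasurableSet (Z ⁻¹' {i}) := by
    rintro ⟨a, b⟩
    have : Z ⁻¹' {(a, b)} = X ⁻¹' {a} ∩ Y ⁻¹' {b} := by
      ext ω
      simp [hZdef]
    rw [this]
    exact (hX (measurableSet_singleton a)).inter (hY (measurableSet_singleton b))
  set w : A × B → ℝ := prob μ Z with hwdef
  have hw : ∀ i, 0 ≤ w i := fun i => ENNReal.toReal_nonneg
  have hα : ∀ a, prob μ X a = ∑ i with i.1 = a, w i := prob_comp μ Z Prod.fst hZ
  have hβ : ∀ b, prob μ Y b = ∑ i with i.2 = b, w i := prob_comp μ Z Prod.snd hZ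
  have h1 : ∑ i, w i = 1 := by
    have h := prob_comp μ Z (fun _ => ()) hZ ()
    simpa [prob, hwdef] using h.symm
  have hsupp' : ∀ i, i ∉ R → w i = 0 := by
    intro i hi
    have : μ (Z ⁻¹' {i}) = 0 := by
      refine measure_mono_null ?_ (ae_iff.1 hsupp)
      intro ω hω
      have hω' : Z ω = i := hω
      show Z ω ∉ R
      rwa [hω']
    simp [hwdef, prob, this]
  have hdA := cond_le_log_deg R Prod.fst w (prob μ X) hw hsupp' h1 hα
  have hdB := cond_le_log_deg R Prod.snd w (prob μ Y) hw hsupp' h1 hβ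
  have hα' : ∀ a, prob μ X a = ∑ b, w (a, b) := fun a => by
    rw [hα, Finset.sum_filter, Fintype.sum_prod_type, Finset.sum_eq_single a] <;> simp_all
  have hβ' : ∀ b, prob μ Y b = ∑ a, w (a, b) := fun b => by
    rw [hβ, Finset.sum_filter, Fintype.sum_prod_type_right, Finset.sum_eq_single b] <;> simp_all
  have hmain := path_gibbs p q r s R (fun a b => w (a, b)) (prob μ X) (prob μ Y)
    (fun a b => hw _) (fun a b => hsupp' _) (by rw [← Fintype.sum_prod_type', ← h1]) hα' hβ'
  rw [← Fintype.sum_prod_type' (f := fun a b => w (a, b) * ((p + r) * Real.log (degA R a)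
    + (q + s) * Real.log (degB R b) + Real.log (prob μ X a) + Real.log (prob μ Y b)
    - 3 * Real.log (w (a, b))))] at hmain
  have hsplit : ∑ x : A × B, w (x.1, x.2) * ((p + r) * Real.log (degA R x.1)
      + (q + s) * Real.log (degB R x.2) + Real.log (prob μ X x.1) + Real.log (prob μ Y x.2)
      - 3 * Real.log (w (x.1, x.2)))
      = (p + r) * ∑ x, w x * Real.log (degA R x.1) + (q + s) * ∑ x, w x * Real.log (degB R x.2)
        + ∑ x, w x * Real.log (prob μ X x.1) + ∑ x, w x * Real.log (prob μ Y x.2)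
        - 3 * ∑ x, w x * Real.log (w x) := by
    simp only [Finset.mul_sum, ← Finset.sum_add_distrib, ← Finset.sum_sub_distrib]
    refine Finset.sum_congr rfl fun x _ => ?_
    ring
  rw [hsplit] at hmain
  have hEX : entropy μ X = - ∑ x, w x * Real.log (prob μ X x.1) := by
    rw [entropy, sum_fiber_mul Prod.fst w (prob μ X) (fun a => Real.log (prob μ X a)) hα]
  have hEY : entropy μ Y = - ∑ x, w x * Real.log (prob μ Y x.2) := by
    rw [entropy, sum_fiber_mul Prod.snd w (prob μ Y) (fun b => Real.log (prob μ Y b)) hβ]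
  have hEZ : entropy μ Z = - ∑ x, w x * Real.log (w x) := rfl
  have hEZ' : entropy μ (fun ω => (Y ω, X ω)) = - ∑ x, w x * Real.log (w x) := by
    rw [entropy, ← (Equiv.prodComm A B).sum_comp]
    have : ∀ x : A × B, prob μ (fun ω => (Y ω, X ω)) (Equiv.prodComm A B x) = w x := by
      rintro ⟨a, b⟩
      simp only [hwdef, prob]
      congr 2
      ext ω
      simp [hZdef, and_comm]
    simp_rw [this]
  have hA := mul_le_mul_of_nonneg_left hdA (add_nonneg hp hr)
  have hB := mul_le_mul_of_nonneg_left hdB (add_nonneg hq hs)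
  simp only [condEntropy, mutualInfo]
  rw [← hZdef, hEX, hEY, hEZ, hEZ']
  simp only [degA, degB] at hmain
  linarith
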